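/- arXiv:2501.07177 — 2 statements merged into one kernel-verified Lean document; each statement's English description precedes it below -/
import Mathlib

section
/- Leibniz rule for the lattice exterior derivative: For a lattice k-form ω and a lattice l-form θ on ℤ^D, with the noncommutative wedge product, d(ω ∧ θ) = (dω) ∧ θ + (−1)^k ω ∧ (dθ). -/
open scoped BigOperators

/-- A site of the hypercubic lattice `ℤ^D`. -/
abbrev Site (D : ℕ) := Fin D → ℤ

/-- The coefficient function of a lattice form on `ℤ^D`: to each site it assigns a
real coefficient depending on a sequence of direction indices (a `k`-form only
uses the first `k` indices). -/
abbrev Coeff (D : ℕ) := Site D → (ℕ → Fin D) → ℝ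

/-- Shift a site by the `μ`-th standard basis vector `ê_μ`. -/
def shiftSite {D : ℕ} (n : Site D) (μ : Fin D) : Site D :=
  fun ν => n ν + if ν = μ then 1 else 0

/-- Forward difference operator `(Δ_μ f)(n) = f(n + ê_μ) - f(n)`. -/
def fdiff {D : ℕ} (μ : Fin D) (f : Site D → ℝ) (n : Site D) : ℝ :=
  f (shiftSite n μ) - f n

/-- Shift a site by `ê_{μ 0} + ê_{μ 1} + ⋯ + ê_{μ (k-1)}`. -/
def multiShift {D : ℕ} (k : ℕ) (n : Site D) (μ : ℕ → Fin D) : Site D :=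
  fun ν => n ν + ∑ i ∈ Finset.range k, (if ν = μ i then 1 else 0)

/-- Antisymmetrization of a coefficient function over its first `k` indices. -/
noncomputable def alt {D : ℕ} (k : ℕ) (c : Coeff D) : Coeff D :=
  fun n μ => ((k.factorial : ℝ))⁻¹ *
    ∑ σ : Equiv.Perm (Fin k), ((Equiv.Perm.sign σ : ℤ) : ℝ) *
      c n (fun i => if h : i < k then μ ↑(σ ⟨i, h⟩) else μ i)

/-- The lattice exterior derivative of a `k`-form: the antisymmetrization over all
`k+1` indices of `Δ_μ ω_{μ₁⋯μ_k}(n)`. -/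
noncomputable def extd {D : ℕ} (k : ℕ) (ω : Coeff D) : Coeff D :=
  alt (k+1) (fun n μ => fdiff (μ 0) (fun x => ω x (fun i => μ (i+1))) n)

/-- The noncommutative wedge product of a `k`-form and an `l`-form on the lattice:
the antisymmetrization over all `k+l` indices of
`ω_{μ₁⋯μ_k}(n) · θ_{ν₁⋯ν_l}(n + ê_{μ₁} + ⋯ + ê_{μ_k})`. -/
noncomputable def wedge {D : ℕ} (k l : ℕ) (ω θ : Coeff D) : Coeff D :=
  alt (k+l) (fun n μ => ω n μ * θ (multiShift k n μ) (fun i => μ (i+k)))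

/-- Iterated noncommutative wedge power of a 2-form (the empty product is the
constant `1`, a 0-form). -/
noncomputable def wpow {D : ℕ} (F : Coeff D) : ℕ → Coeff D
  | 0 => fun _ _ => 1
  | m+1 => wedge 2 (2*m) F (wpow F m)

/-- Noncommutative wedge product of a list of (degree, form) pairs. -/
noncomputable def wedgeList {D : ℕ} : List (ℕ × Coeff D) → Coeff D
  | [] => fun _ _ => 1
  | (d, ω) :: rest => wedge d ((rest.map Prod.fst).sum) ω (wedgeList rest)

/-- `ω` is a genuine lattice `k`-form: its coefficient depends only on the first
`k` indices and is totally antisymmetric in them. -/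
def IsLatticeForm (D k : ℕ) (ω : Coeff D) : Prop :=
  (∀ (n : Site D) (μ ν : ℕ → Fin D), (∀ i < k, μ i = ν i) → ω n μ = ω n ν) ∧
  (∀ (n : Site D) (μ : ℕ → Fin D) (σ : Equiv.Perm (Fin k)),
    ω n (fun i => if h : i < k then μ ↑(σ ⟨i, h⟩) else μ i)
      = ((Equiv.Perm.sign σ : ℤ) : ℝ) * ω n μ)

/-- Extend a tuple `m : Fin j → ℕ` to `ℕ → ℕ` by zero. -/
def mext {j : ℕ} (m : Fin j → ℕ) : ℕ → ℕ :=
  fun i => if h : i < j then m ⟨i, h⟩ else 0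

/-- The curvature 2-form `F = dA` of a lattice 1-form `A`. -/
noncomputable def curv {D : ℕ} (A : Coeff D) : Coeff D := extd 1 A

/-- The standard descent product
`F_0^{m_0} ∧ η^{1,0} ∧ F_1^{m_1} ∧ η^{2,1} ∧ ⋯ ∧ η^{k,k-1} ∧ F_k^{m_k}`,
with `F_i = dA_i` and `η^{i,i-1} = A_i - A_{i-1}`, as a list of (degree, form) pairs. -/
noncomputable def descentList {D : ℕ} (k : ℕ) (A : ℕ → Coeff D) (m : ℕ → ℕ) : List (ℕ × Coeff D) :=
  (2 * m 0, wpow (curv (A 0)) (m 0)) ::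
    (List.range k).flatMap (fun i =>
      [(1, A (i+1) - A i), (2 * m (i+1), wpow (curv (A (i+1))) (m (i+1)))])

/-- The Chern–Simons type characteristic class `Q_r^{(k)}(A_0,…,A_k)` on the lattice:
the sum over compositions `m_0 + ⋯ + m_k = r - k` of the descent products. -/
noncomputable def Qpoly {D : ℕ} (r k : ℕ) (A : ℕ → Coeff D) : Coeff D :=
  ∑ m ∈ Finset.Nat.antidiagonalTuple (k+1) (r - k), wedgeList (descentList k A (mext m))

/-- extension of a permutation to a map on indices -/
def pact (k : ℕ) (σ : Equiv.Perm (Fin k)) : ℕ → ℕ :=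
  fun i => if h : i < k then ↑(σ ⟨i, h⟩) else i

theorem alt_eq_pact {D : ℕ} (k : ℕ) (c : Coeff D) (n : Site D) (μ : ℕ → Fin D) :
    alt k c n μ = ((k.factorial : ℝ))⁻¹ *
      ∑ σ : Equiv.Perm (Fin k), ((Equiv.Perm.sign σ : ℤ) : ℝ) *
        c n (fun i => μ (pact k σ i)) := by
  unfold alt
  congr 1
  refine Finset.sum_congr rfl fun σ _ => ?_
  congr 2
  funext i
  unfold pact
  split_ifs <;> rfl

theorem pact_mul (k : ℕ) (σ τ : Equiv.Perm (Fin k)) (i : ℕ) :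
    pact k (σ * τ) i = pact k σ (pact k τ i) := by
  unfold pact
  by_cases h : i < k <;> simp [h]

theorem sign_sq (k : ℕ) (σ : Equiv.Perm (Fin k)) :
    ((Equiv.Perm.sign σ : ℤ) : ℝ) * ((Equiv.Perm.sign σ : ℤ) : ℝ) = 1 := by
  rcases Int.units_eq_one_or (Equiv.Perm.sign σ) with h | h <;> simp [h]

theorem alt_pact {D : ℕ} (N : ℕ) (c : Coeff D) (τ : Equiv.Perm (Fin N)) (n : Site D)
    (μ : ℕ → Fin D) :
    alt N (fun n μ => c n (fun i => μ (pact N τ i))) n μ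
      = ((Equiv.Perm.sign τ : ℤ) : ℝ) * alt N c n μ := by
  rw [alt_eq_pact, alt_eq_pact, mul_left_comm]
  congr 1
  rw [Finset.mul_sum, ← Equiv.sum_comp (Equiv.mulRight τ)
    (fun σ => ((Equiv.Perm.sign τ : ℤ) : ℝ) * (((Equiv.Perm.sign σ : ℤ) : ℝ) *
        c n (fun i => μ (pact N σ i))))]
  refine Finset.sum_congr rfl fun σ _ => ?_
  simp only [Equiv.coe_mulRight, pact_mul, Equiv.Perm.sign_mul, Units.val_mul, Int.cast_mul]
  linear_combination (-((Equiv.Perm.sign σ : ℤ) : ℝ) *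
    c n (fun i => μ (pact N σ (pact N τ i)))) * sign_sq N τ

theorem alt_avg {D : ℕ} (N m : ℕ) (c : Coeff D) (ψ : Equiv.Perm (Fin m) → Equiv.Perm (Fin N))
    (hψ : ∀ σ, Equiv.Perm.sign (ψ σ) = Equiv.Perm.sign σ) :
    alt N (fun n μ => ((m.factorial : ℝ))⁻¹ *
      ∑ σ : Equiv.Perm (Fin m), ((Equiv.Perm.sign σ : ℤ) : ℝ) *
        c n (fun i => μ (pact N (ψ σ) i))) = alt N c := by
  funext n μ
  have key : alt N (fun n μ => ((m.factorial : ℝ))⁻¹ *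
      ∑ σ : Equiv.Perm (Fin m), ((Equiv.Perm.sign σ : ℤ) : ℝ) *
        c n (fun i => μ (pact N (ψ σ) i))) n μ
      = ((m.factorial : ℝ))⁻¹ * ∑ σ : Equiv.Perm (Fin m), ((Equiv.Perm.sign σ : ℤ) : ℝ) *
        alt N (fun n μ => c n (fun i => μ (pact N (ψ σ) i))) n μ := by
    simp only [alt_eq_pact, Finset.mul_sum]
    rw [Finset.sum_comm]
    refine Finset.sum_congr rfl fun σ _ => Finset.sum_congr rfl fun τ _ => ?_
    ring
  rw [key]
  have : ∀ σ : Equiv.Perm (Fin m), ((Equiv.Perm.sign σ : ℤ) : ℝ) *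
        alt N (fun n μ => c n (fun i => μ (pact N (ψ σ) i))) n μ = alt N c n μ := by
    intro σ
    rw [alt_pact, hψ, ← mul_assoc, sign_sq, one_mul]
  simp only [this]
  rw [Finset.sum_const, Finset.card_univ, Fintype.card_perm, Fintype.card_fin, nsmul_eq_mul,
    ← mul_assoc, inv_mul_cancel₀ (by positivity), one_mul]

theorem exists_lift (a m N : ℕ) (h : a + m ≤ N) (σ : Equiv.Perm (Fin m)) :
    ∃ τ : Equiv.Perm (Fin N), Equiv.Perm.sign τ = Equiv.Perm.sign σ ∧
      (∀ i, pact N τ (i + a) = pact m σ i + a) ∧ ∀ i < a, pact N τ i = i := by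
  let f : Fin m ↪ Fin N := ⟨fun i => ⟨i + a, by omega⟩, by
    intro i j hij
    simp only [Fin.mk.injEq] at hij
    exact Fin.ext (by omega)⟩
  refine ⟨σ.viaFintypeEmbedding f, Equiv.Perm.viaFintypeEmbedding_sign σ f, ?_, ?_⟩
  · intro i
    unfold pact
    by_cases hi : i < m
    · have h1 : i + a < N := by omega
      have h2 : (⟨i + a, h1⟩ : Fin N) = f ⟨i, hi⟩ := rfl
      rw [dif_pos h1, dif_pos hi, h2, Equiv.Perm.viaFintypeEmbedding_apply_image]
      rfl
    · rw [dif_neg hi]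
      split_ifs with h1
      · rw [Equiv.Perm.viaFintypeEmbedding_apply_notMem_range]
        rintro ⟨j, hj⟩
        have h9 : (j : ℕ) + a = _ := congrArg Fin.val hj
        simp only at h9
        omega
      · rfl
  · intro i hi
    unfold pact
    split_ifs with h1
    · rw [Equiv.Perm.viaFintypeEmbedding_apply_notMem_range]
      rintro ⟨j, hj⟩
      have h9 : (j : ℕ) + a = _ := congrArg Fin.val hj
      simp only at h9
      omega
    · rfl

theorem multiShift_congr {D : ℕ} (k : ℕ) (n : Site D) (μ ν : ℕ → Fin D)
    (h : ∀ i < k, μ i = ν i) : multiShift k n μ = multiShift k n ν := by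
  funext x
  unfold multiShift
  congr 1
  refine Finset.sum_congr rfl fun i hi => ?_
  rw [h i (Finset.mem_range.1 hi)]

theorem multiShift_pact {D : ℕ} (k : ℕ) (n : Site D) (μ : ℕ → Fin D) (σ : Equiv.Perm (Fin k)) :
    multiShift k n (fun i => μ (pact k σ i)) = multiShift k n μ := by
  funext x
  unfold multiShift
  congr 1
  rw [Finset.sum_range, Finset.sum_range,
    ← Equiv.sum_comp σ (fun i : Fin k => if x = μ i then (1 : ℤ) else 0)]
  refine Finset.sum_congr rfl fun i _ => ?_
  simp [pact]

theorem multiShift_shift {D : ℕ} (k : ℕ) (n : Site D) (μ : ℕ → Fin D) :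
    multiShift k (shiftSite n (μ 0)) (fun i => μ (i + 1)) = multiShift (k + 1) n μ := by
  funext x
  simp only [multiShift, shiftSite, Finset.sum_range_succ']
  ring

theorem shift_multiShift {D : ℕ} (k : ℕ) (n : Site D) (μ : ℕ → Fin D) :
    shiftSite (multiShift k n μ) (μ k) = multiShift (k + 1) n μ := by
  funext x
  simp only [multiShift, shiftSite, Finset.sum_range_succ]
  ring

theorem lhs_eq {D : ℕ} (m : ℕ) (c : Coeff D) : extd m (alt m c) = extd m c := by
  choose ψ h1 h2 h3 using exists_lift 1 m (m + 1) (by omega)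
  unfold extd
  refine Eq.trans ?_ (alt_avg (m + 1) m _ ψ h1)
  congr 1
  funext n μ
  simp only [fdiff, alt_eq_pact, h2, h3 _ 0 Nat.zero_lt_one]
  rw [← mul_sub, ← Finset.sum_sub_distrib]
  congr 1
  refine Finset.sum_congr rfl fun σ _ => ?_
  ring

theorem wedge_left {D : ℕ} (m l : ℕ) (c θ : Coeff D) :
    wedge m l (alt m c) θ = wedge m l c θ := by
  choose ψ h1 h2 h3 using exists_lift 0 m (m + l) (by omega)
  have h4 : ∀ σ i, pact (m + l) (ψ σ) i = pact m σ i := fun σ i => h2 σ i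
  have h5 : ∀ σ i, pact m σ (i + m) = i + m := fun σ i => by simp [pact]
  unfold wedge
  refine Eq.trans ?_ (alt_avg (m + l) m _ ψ h1)
  congr 1
  funext n μ
  simp only [alt_eq_pact, h4, h5, multiShift_pact]
  rw [mul_assoc, Finset.sum_mul]
  simp only [mul_assoc]

theorem wedge_right {D : ℕ} (k m : ℕ) (ω c : Coeff D)
    (hω : ∀ (n : Site D) (μ ν : ℕ → Fin D), (∀ i < k, μ i = ν i) → ω n μ = ω n ν) :
    wedge k m ω (alt m c) = wedge k m ω c := by
  choose ψ h1 h2 h3 using exists_lift k m (k + m) (by omega)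
  unfold wedge
  refine Eq.trans ?_ (alt_avg (k + m) m _ ψ h1)
  congr 1
  funext n μ
  have h4 : ∀ σ, ω n (fun i => μ (pact (k + m) (ψ σ) i)) = ω n μ := fun σ =>
    hω _ _ _ fun i hi => by rw [h3 σ i hi]
  have h5 : ∀ σ, multiShift k n (fun i => μ (pact (k + m) (ψ σ) i)) = multiShift k n μ :=
    fun σ => multiShift_congr _ _ _ _ fun i hi => by rw [h3 σ i hi]
  simp only [alt_eq_pact, h2, h4, h5]
  rw [mul_left_comm, Finset.mul_sum]
  congr 1
  refine Finset.sum_congr rfl fun σ _ => ?_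
  ring

theorem alt_add' {D : ℕ} (N : ℕ) (c c' : Coeff D) :
    alt N (c + c') = alt N c + alt N c' := by
  funext n μ
  simp only [alt, Pi.add_apply, mul_add, Finset.sum_add_distrib]

theorem cyc (N k : ℕ) (hk : k < N) : ∃ τ : Equiv.Perm (Fin N),
    ((Equiv.Perm.sign τ : ℤ) : ℝ) = (-1) ^ k ∧ (∀ i < k, pact N τ i = i + 1) ∧
    pact N τ k = 0 ∧ ∀ i, pact N τ (i + 1 + k) = i + 1 + k := by
  obtain ⟨M, rfl⟩ : ∃ M, N = M + 1 := ⟨N - 1, by omega⟩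
  refine ⟨Fin.cycleRange ⟨k, hk⟩, ?_, ?_, ?_, ?_⟩
  · simp [Fin.sign_cycleRange]
  · intro i hi
    have : i < M + 1 := by omega
    rw [pact, dif_pos this, Fin.coe_cycleRange_of_lt (by simpa using hi)]
  · rw [pact, dif_pos hk, Fin.cycleRange_self]; rfl
  · intro i
    unfold pact
    split_ifs with h
    · rw [Fin.cycleRange_of_gt (by simp only [Fin.mk_lt_mk]; omega)]
    · rfl

/-- **Leibniz rule for the lattice exterior derivative.** For a lattice `k`-form
`ω` and a lattice `l`-form `θ` on `ℤ^D`, with the noncommutative wedge product,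
`d(ω ∧ θ) = (dω) ∧ θ + (−1)^k ω ∧ (dθ)`. -/
theorem lattice_leibniz (D k l : ℕ) (ω θ : Coeff D)
    (hω : IsLatticeForm D k ω) (hθ : IsLatticeForm D l θ) :
    extd (k+l) (wedge k l ω θ)
      = wedge (k+1) l (extd k ω) θ + ((-1 : ℝ) ^ k) • wedge k (l+1) ω (extd l θ) := by
  have e1 : extd (k+l) (wedge k l ω θ) = extd (k+l)
      (fun n μ => ω n μ * θ (multiShift k n μ) (fun i => μ (i+k))) := lhs_eq _ _
  have e2 : wedge (k+1) l (extd k ω) θ = wedge (k+1) l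
      (fun n μ => fdiff (μ 0) (fun x => ω x (fun i => μ (i+1))) n) θ := wedge_left _ _ _ _
  have e3 : wedge k (l+1) ω (extd l θ) = wedge k (l+1) ω
      (fun n μ => fdiff (μ 0) (fun x => θ x (fun i => μ (i+1))) n) := wedge_right _ _ _ _ hω.1
  obtain ⟨τ, t1, t2, t3, t4⟩ := cyc (k + l + 1) k (by omega)
  rw [e1, e2, e3]
  unfold extd wedge
  rw [show k + 1 + l = k + l + 1 by omega, ← add_assoc k l 1]
  have e4 : ∀ c : Coeff D, (-1 : ℝ) ^ k • alt (k + l + 1) c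
      = alt (k + l + 1) (fun n μ => c n (fun i => μ (pact (k + l + 1) τ i))) := by
    intro c
    funext n μ
    rw [alt_pact, t1]
    rfl
  rw [e4, ← alt_add']
  congr 1
  funext n μ
  have a1 : ω n (fun i => μ (pact (k + l + 1) τ i)) = ω n (fun i => μ (i + 1)) :=
    hω.1 _ _ _ fun i hi => by rw [t2 i hi]
  have a2 : multiShift k n (fun i => μ (pact (k + l + 1) τ i))
      = multiShift k n (fun i => μ (i + 1)) :=
    multiShift_congr _ _ _ _ fun i hi => by rw [t2 i hi]
  have a3 : shiftSite (multiShift k n (fun i => μ (i + 1))) (μ 0) = multiShift (k + 1) n μ := by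
    rw [← multiShift_shift]
    funext x
    simp only [multiShift, shiftSite]
    ring
  have a4 : ∀ i, i + 1 + k = i + k + 1 := fun i => by omega
  simp only [Pi.add_apply, fdiff, a1, a2, Nat.zero_add, t3, t4, a3, multiShift_shift]
  simp only [a4, ← add_assoc]
  ring
end

section
/- Gauge variation of the lattice Chern–Simons form is exact: Let A be a lattice 1-form on ℤ^D and let λ, N : ℤ^D → ℝ be lattice 0-forms. Set A' = A − dλ − 2π·dN. Then, with the noncommutative wedge product, A' ∧ dA' − A ∧ dA = d( (dλ) ∧ A ) + 2π · d( (dN) ∧ A ); in particular the lattice Chern–Simons form A ∧ dA changes by an exact lattice 3-form under the gauge transformation A ↦ A − dλ − 2π dN. -/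
open scoped BigOperators

def sq3 {D : ℕ} (μ : ℕ → Fin D) (i j k : ℕ) : ℕ → Fin D :=
  fun m => if m = 0 then μ i else if m = 1 then μ j else if m = 2 then μ k else μ m

lemma alt_one {D : ℕ} (c : Coeff D) (n : Site D) (μ : ℕ → Fin D) :
    alt 1 c n μ = c n μ := by
  have : (fun i => if h : i < 1 then μ ↑((1 : Equiv.Perm (Fin 1)) ⟨i, h⟩) else μ i) = μ := by
    funext i; rcases i with _ | i <;> simp
  simp only [alt, Fintype.sum_unique]
  rw [show (default : Equiv.Perm (Fin 1)) = 1 from Subsingleton.elim _ _, this]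
  simp

lemma perm_arg {D : ℕ} (μ : ℕ → Fin D) (σ : Equiv.Perm (Fin 3)) :
    (fun i => if h : i < 3 then μ ↑(σ ⟨i, h⟩) else μ i)
      = sq3 μ (σ 0) (σ 1) (σ 2) := by
  funext i
  rcases i with _ | _ | _ | i <;> simp [sq3]

lemma perm_arg2 {D : ℕ} (μ : ℕ → Fin D) (σ : Equiv.Perm (Fin 2)) :
    (fun i => if h : i < 2 then μ ↑(σ ⟨i, h⟩) else μ i)
      = sq3 μ (σ 0) (σ 1) 2 := by
  funext i
  rcases i with _ | _ | _ | i <;> simp [sq3]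

lemma alt_two {D : ℕ} (c : Coeff D) (n : Site D) (μ : ℕ → Fin D) :
    alt 2 c n μ = 2⁻¹ * (c n (sq3 μ 0 1 2) - c n (sq3 μ 1 0 2)) := by
  have hu : (Finset.univ : Finset (Equiv.Perm (Fin 2))) = {1, Equiv.swap 0 1} := by decide
  have hne : (1 : Equiv.Perm (Fin 2)) ∉ ({Equiv.swap 0 1} : Finset (Equiv.Perm (Fin 2))) := by decide
  simp only [alt, perm_arg2, hu]
  rw [Finset.sum_insert hne, Finset.sum_singleton]
  simp [Nat.factorial]
  ring

lemma alt_three {D : ℕ} (c : Coeff D) (n : Site D) (μ : ℕ → Fin D) :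
    alt 3 c n μ = 6⁻¹ * (c n (sq3 μ 0 1 2) - c n (sq3 μ 1 0 2) - c n (sq3 μ 2 1 0)
      - c n (sq3 μ 0 2 1) + c n (sq3 μ 1 2 0) + c n (sq3 μ 2 0 1)) := by
  have hs : ∀ f : Equiv.Perm (Fin 3) → ℝ, ∑ σ, f σ = f 1 + f (Equiv.swap 0 1)
      + f (Equiv.swap 0 2) + f (Equiv.swap 1 2) + f (Equiv.swap 0 1 * Equiv.swap 1 2)
      + f (Equiv.swap 1 2 * Equiv.swap 0 1) := by
    intro f
    have hu : (Finset.univ : Finset (Equiv.Perm (Fin 3))) =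
      {1, Equiv.swap 0 1, Equiv.swap 0 2, Equiv.swap 1 2, Equiv.swap 0 1 * Equiv.swap 1 2,
        Equiv.swap 1 2 * Equiv.swap 0 1} := by decide
    rw [hu, Finset.sum_insert (by decide), Finset.sum_insert (by decide),
      Finset.sum_insert (by decide), Finset.sum_insert (by decide),
      Finset.sum_insert (by decide), Finset.sum_singleton]
    ring
  have h1 : ∀ σ : Equiv.Perm (Fin 3), ∀ s : ℤ, ∀ i j k : ℕ,
      (((Equiv.Perm.sign σ : ℤˣ) : ℤ) = s ∧ ((σ 0 : Fin 3) : ℕ) = i ∧ ((σ 1 : Fin 3) : ℕ) = j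
        ∧ ((σ 2 : Fin 3) : ℕ) = k) →
      ((Equiv.Perm.sign σ : ℤ) : ℝ) * c n (sq3 μ (σ 0) (σ 1) (σ 2)) = s * c n (sq3 μ i j k) := by
    rintro σ s i j k ⟨h, ha, hb, hc⟩
    rw [h, ha, hb, hc]
  simp only [alt, perm_arg, hs]
  rw [h1 1 1 0 1 2 (by decide), h1 (Equiv.swap 0 1) (-1) 1 0 2 (by decide),
    h1 (Equiv.swap 0 2) (-1) 2 1 0 (by decide), h1 (Equiv.swap 1 2) (-1) 0 2 1 (by decide),
    h1 (Equiv.swap 0 1 * Equiv.swap 1 2) 1 1 2 0 (by decide),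
    h1 (Equiv.swap 1 2 * Equiv.swap 0 1) 1 2 0 1 (by decide)]
  norm_num [Nat.factorial]
  ring

lemma multiShift_one {D : ℕ} (n : Site D) (μ : ℕ → Fin D) :
    multiShift 1 n μ = shiftSite n (μ 0) := by
  funext ν; simp only [multiShift, shiftSite, Finset.sum_range_one]

lemma shift_comm {D : ℕ} (n : Site D) (a b : Fin D) :
    shiftSite (shiftSite n a) b = shiftSite (shiftSite n b) a := by
  funext ν; simp only [shiftSite]; ring

/-- **Gauge variation of the lattice Chern–Simons form is exact.** For a lattice
1-form `A` on `ℤ^D` and lattice 0-forms `λ, N : ℤ^D → ℝ`, with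
`A' = A − dλ − 2π·dN`, one has
`A' ∧ dA' − A ∧ dA = d((dλ) ∧ A) + 2π · d((dN) ∧ A)`. -/
theorem chern_simons_gauge_variation (D : ℕ) (A : Coeff D) (hA : IsLatticeForm D 1 A)
    (lam N : Site D → ℝ) :
    wedge 1 2
        (A - extd 0 ((fun n _ => lam n) : Coeff D)
           - (2 * Real.pi) • extd 0 ((fun n _ => N n) : Coeff D))
        (extd 1
          (A - extd 0 ((fun n _ => lam n) : Coeff D)
             - (2 * Real.pi) • extd 0 ((fun n _ => N n) : Coeff D)))
      - wedge 1 2 A (extd 1 A)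
      = extd 2 (wedge 1 1 (extd 0 ((fun n _ => lam n) : Coeff D)) A)
        + (2 * Real.pi) • extd 2 (wedge 1 1 (extd 0 ((fun n _ => N n) : Coeff D)) A) := by
  obtain ⟨a, rfl⟩ : ∃ a : Site D → Fin D → ℝ, A = fun n μ => a n (μ 0) := by
    refine ⟨fun n i => A n (fun _ => i), ?_⟩
    funext n μ
    apply hA.1
    intro i hi
    have : i = 0 := by omega
    rw [this]
  funext n μ
  simp only [wedge, extd, Nat.reduceAdd, Pi.sub_apply, Pi.add_apply, Pi.smul_apply, smul_eq_mul,
    alt_one, alt_two, alt_three, zero_add, multiShift_one, fdiff]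
  simp only [sq3, Nat.reduceAdd, zero_add, one_ne_zero, OfNat.ofNat_ne_zero, OfNat.ofNat_ne_one,
    if_true, if_false]
  rw [shift_comm n (μ 1) (μ 0), shift_comm n (μ 2) (μ 0), shift_comm n (μ 2) (μ 1),
    shift_comm (shiftSite n (μ 0)) (μ 2) (μ 1), shift_comm (shiftSite n (μ 1)) (μ 2) (μ 0)]
  simp only [shift_comm n (μ 1) (μ 0)]
  ring
end
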